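/- Let (k : K → X, f : X → M) be a Schreier extension with K commutative. Then the induced map ∗ satisfies: (A1) 1 ∗ a = a for all a ∈ K; (A2) m ∗ 0 = 0 for all m ∈ M; (A3) m ∗ (a + a') = m ∗ a + m ∗ a' for all m ∈ M and a, a' ∈ K. -/

import Mathlib

/-- A monoid extension: `K`, `X` additive monoids (not assumed commutative),
`M` a multiplicative monoid, `k : K → X` an injective monoid homomorphism whose image
is `{x | f x = 1}`, and `f : X → M` a surjective monoid homomorphism. -/
structure MonoidExtension {K X M : Type*} [AddMonoid K] [AddMonoid X] [Monoid M]
    (k : K → X) (f : X → M) : Prop where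
  k_add : ∀ a b : K, k (a + b) = k a + k b
  k_zero : k 0 = 0
  k_inj : Function.Injective k
  ker_eq : ∀ x : X, f x = 1 ↔ x ∈ Set.range k
  f_add : ∀ x y : X, f (x + y) = f x * f y
  f_zero : f 0 = 1
  f_surj : Function.Surjective f

/-- The set `B_m` of representatives of `m`. -/
def Reps {K X M : Type*} [AddMonoid K] [AddMonoid X] [Monoid M]
    (k : K → X) (f : X → M) (m : M) : Set X :=
  {u | f u = m ∧ ∀ x : X, f x = m → ∃! a : K, x = k a + u}

/-- A monoid extension is a Schreier extension if every `m` has a representative. -/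
def IsSchreier {K X M : Type*} [AddMonoid K] [AddMonoid X] [Monoid M]
    (k : K → X) (f : X → M) : Prop :=
  ∀ m : M, (Reps k f m).Nonempty

/-!
A representative `u` of `m` can be cancelled on the right of `k b + u`, so `m ∗ a` is the only `b`
for which `u` semiconjugates `k a` to `k b`. Semiconjugation by a fixed `u` respects `0` and `+`,
which gives (A2) and (A3); taking `0` as representative of `1` gives (A1).
-/

namespace MonoidExtension

variable {K X M : Type*} [AddMonoid K] [AddMonoid X] [Monoid M] {k : K → X} {f : X → M}

theorem map_k (hE : MonoidExtension k f) (a : K) : f (k a) = 1 :=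
  (hE.ker_eq (k a)).2 ⟨a, rfl⟩

theorem zero_mem_reps (hE : MonoidExtension k f) : (0 : X) ∈ Reps k f 1 := by
  refine ⟨hE.f_zero, fun x hx => ?_⟩
  obtain ⟨a, rfl⟩ := (hE.ker_eq x).1 hx
  simp only [add_zero]
  exact ⟨a, rfl, fun b hb => (hE.k_inj hb).symm⟩

theorem k_add_right_injective (hE : MonoidExtension k f) {m : M} {u : X} (hu : u ∈ Reps k f m) :
    Function.Injective fun a => k a + u := by
  intro b c hbc
  have hf : f (k b + u) = m := by rw [hE.f_add, hE.map_k, one_mul, hu.1]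
  exact (hu.2 _ hf).unique rfl hbc

theorem eq_of_addSemiconjBy (hE : MonoidExtension k f) {m : M} {u : X} (hu : u ∈ Reps k f m)
    {x : X} {b c : K} (hb : AddSemiconjBy u x (k b)) (hc : AddSemiconjBy u x (k c)) : b = c :=
  hE.k_add_right_injective hu (hb.eq.symm.trans hc.eq)

theorem exists_normalized_reps (hE : MonoidExtension k f) (hS : IsSchreier k f) :
    ∃ u : M → X, (∀ m, u m ∈ Reps k f m) ∧ u 1 = 0 := by
  classical
  choose v hv using hS
  refine ⟨Function.update v 1 0, fun m => ?_, Function.update_self ..⟩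
  obtain rfl | hm := eq_or_ne m 1
  · simpa only [Function.update_self] using hE.zero_mem_reps
  · simpa only [Function.update_of_ne hm] using hv m

end MonoidExtension

theorem action_axioms_A1_A2_A3_general {K X M : Type*} [AddMonoid K] [AddMonoid X] [Monoid M]
    {k : K → X} {f : X → M} (hE : MonoidExtension k f)
    {u : M → X} (hu : ∀ m, u m ∈ Reps k f m) (hu_one : u 1 = 0)
    {star : M → K → K} (hstar : ∀ m a, AddSemiconjBy (u m) (k a) (k (star m a))) :
    (∀ a : K, star 1 a = a) ∧
    (∀ m : M, star m 0 = 0) ∧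
    (∀ (m : M) (a a' : K), star m (a + a') = star m a + star m a') := by
  refine ⟨fun a => ?_, fun m => ?_, fun m a a' => ?_⟩
  · have h : AddSemiconjBy (u 1) (k a) (k a) := hu_one ▸ AddSemiconjBy.zero_left (k a)
    exact hE.eq_of_addSemiconjBy (hu 1) (hstar 1 a) h
  · have h : AddSemiconjBy (u m) (k 0) (k 0) := hE.k_zero ▸ AddSemiconjBy.zero_right (u m)
    exact hE.eq_of_addSemiconjBy (hu m) (hstar m 0) h
  · have h : AddSemiconjBy (u m) (k (a + a')) (k (star m a + star m a')) := by
      simpa only [hE.k_add] using (hstar m a).add_right (hstar m a')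
    exact hE.eq_of_addSemiconjBy (hu m) (hstar m (a + a')) h

/-- Proposition 3.1 (prop:monoid action), first part: for a Schreier extension with `K`
commutative, the induced map `∗` (characterised by `u + k a = k (m ∗ a) + u` for any
representative `u` of `m`) satisfies the action axioms (A1), (A2) and (A3). -/
theorem action_axioms_A1_A2_A3 {K X M : Type*} [AddCommMonoid K] [AddMonoid X] [Monoid M]
    (k : K → X) (f : X → M) (hE : MonoidExtension k f) (hS : IsSchreier k f)
    (star : M → K → K)
    (hstar : ∀ (m : M) (a : K) (u : X), u ∈ Reps k f m → u + k a = k (star m a) + u) :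
    (∀ a : K, star 1 a = a) ∧
    (∀ m : M, star m 0 = 0) ∧
    (∀ (m : M) (a a' : K), star m (a + a') = star m a + star m a') := by
  obtain ⟨u, hu, hu_one⟩ := hE.exists_normalized_reps hS
  exact action_axioms_A1_A2_A3_general hE hu hu_one fun m a => hstar m a (u m) (hu m)
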